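/- arXiv:2303.14938 — 2 statements merged into one kernel-verified Lean document; each statement's English description precedes it below -/
import Mathlib

section
/- Let μ be a probability measure on ℝⁿ with a regular, log-concave density ρ = e^{−ψ}. Then the varentropy inequality holds: Var_μ(ψ) = ∫ ψ² dμ − (∫ ψ dμ)² ≤ n. -/
open MeasureTheory Real
open scoped ENNReal RealInnerProductSpace

noncomputable section

abbrev Euc (n : ℕ) := EuclideanSpace ℝ (Fin n)

/-- A nonnegative function `g` is log-concave: `g(ax+by) ≥ g(x)^a g(y)^b`. -/
def IsLogConcaveFun {n : ℕ} (g : Euc n → ℝ) : Prop :=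
  (∀ x, 0 ≤ g x) ∧
  ∀ x y : Euc n, ∀ a b : ℝ, 0 ≤ a → 0 ≤ b → a + b = 1 →
    g x ^ a * g y ^ b ≤ g (a • x + b • y)

def IsLogConcaveMeasure {n : ℕ} (μ : Measure (Euc n)) : Prop :=
  ∃ ρ : Euc n → ℝ, Measurable ρ ∧ IsLogConcaveFun ρ ∧
    μ = volume.withDensity (fun x => ENNReal.ofReal (ρ x))

def poincareSet {n : ℕ} (μ : Measure (Euc n)) : Set ℝ :=
  {C : ℝ | 0 ≤ C ∧ ∀ f : Euc n → ℝ, LocallyLipschitz f →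
    Integrable (fun x => ‖gradient f x‖ ^ 2) μ →
    ∫ x, f x ^ 2 ∂μ - (∫ x, f x ∂μ) ^ 2 ≤ C * ∫ x, ‖gradient f x‖ ^ 2 ∂μ}

def poincareConst {n : ℕ} (μ : Measure (Euc n)) : ℝ := sInf (poincareSet μ)

def covMatrix {n : ℕ} (μ : Measure (Euc n)) : Matrix (Fin n) (Fin n) ℝ :=
  Matrix.of fun i j => ∫ x, x i * x j ∂μ - (∫ x, x i ∂μ) * (∫ x, x j ∂μ)

def opNorm {n : ℕ} (M : Matrix (Fin n) (Fin n) ℝ) : ℝ :=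
  ‖Matrix.toEuclideanCLM (𝕜 := ℝ) M‖

def IsIsotropic {n : ℕ} (μ : Measure (Euc n)) : Prop :=
  (∫ x, x ∂μ) = 0 ∧ ∀ i j, ∫ x, x i * x j ∂μ = if i = j then 1 else 0

def UniformlyLogConcave {n : ℕ} (t : ℝ) (μ : Measure (Euc n)) : Prop :=
  ∃ g : Euc n → ℝ, Measurable g ∧ IsLogConcaveFun g ∧
    μ = volume.withDensity (fun x => ENNReal.ofReal (Real.exp (-t * ‖x‖ ^ 2 / 2) * g x))

def IsRegularPotential {n : ℕ} (ψ : Euc n → ℝ) : Prop :=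
  ContDiff ℝ (⊤ : ℕ∞) ψ ∧
  (∃ ε : ℝ, 0 < ε ∧ ∀ x v : Euc n,
    ε * ‖v‖ ^ 2 ≤ iteratedFDeriv ℝ 2 ψ x ![v, v] ∧
    iteratedFDeriv ℝ 2 ψ x ![v, v] ≤ ε⁻¹ * ‖v‖ ^ 2) ∧
  (∀ m : ℕ, ∃ C : ℝ, ∃ k : ℕ, ∀ x, ‖iteratedFDeriv ℝ m ψ x‖ ≤ C * (1 + ‖x‖) ^ k)

def IsRegularMeasure {n : ℕ} (μ : Measure (Euc n)) (ψ : Euc n → ℝ) : Prop :=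
  IsRegularPotential ψ ∧ μ = volume.withDensity (fun x => ENNReal.ofReal (Real.exp (-ψ x)))

def IsTempered {n : ℕ} (ρ : Euc n → ℝ) (f : Euc n → ℝ) : Prop :=
  ContDiff ℝ (⊤ : ℕ∞) f ∧ ∀ m : ℕ, ∃ C : ℝ, 0 < C ∧ ∃ a : ℝ, 0 < a ∧ ∀ x,
    ‖iteratedFDeriv ℝ m f x‖ ≤ C / Real.sqrt (ρ x) * Real.exp (-a * ‖x‖)

def lap {n : ℕ} (f : Euc n → ℝ) (x : Euc n) : ℝ :=
  ∑ i, iteratedFDeriv ℝ 2 f x ![EuclideanSpace.single i (1:ℝ), EuclideanSpace.single i (1:ℝ)]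

def Lop {n : ℕ} (ψ u : Euc n → ℝ) (x : Euc n) : ℝ :=
  lap u x - ⟪gradient ψ x, gradient u x⟫

def gaussDensity (n : ℕ) (s : ℝ) (x : Euc n) : ℝ :=
  (2 * π * s) ^ (-(n : ℝ) / 2) * Real.exp (-‖x‖ ^ 2 / (2 * s))

def gaussMeasure (n : ℕ) (s : ℝ) : Measure (Euc n) :=
  volume.withDensity fun x => ENNReal.ofReal (gaussDensity n s x)

def tiltZ {n : ℕ} (ρ : Euc n → ℝ) (t : ℝ) (θ : Euc n) : ℝ :=
  ∫ x, Real.exp (⟪θ, x⟫ - t * ‖x‖ ^ 2 / 2) * ρ x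

def tiltDensity {n : ℕ} (ρ : Euc n → ℝ) (t : ℝ) (θ : Euc n) (x : Euc n) : ℝ :=
  Real.exp (⟪θ, x⟫ - t * ‖x‖ ^ 2 / 2) * ρ x / tiltZ ρ t θ

def tiltMeasure {n : ℕ} (ρ : Euc n → ℝ) (t : ℝ) (θ : Euc n) : Measure (Euc n) :=
  volume.withDensity fun x => ENNReal.ofReal (tiltDensity ρ t θ x)

def varD {n : ℕ} (p : Euc n → ℝ) (f : Euc n → ℝ) : ℝ :=
  (∫ x, f x ^ 2 * p x) - (∫ x, f x * p x) ^ 2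

end

/-- One-dimensional Brunn-Minkowski for compact sets. -/
lemma bm_compact {K L : Set ℝ} (hK : IsCompact K) (hL : IsCompact L) (hKn : K.Nonempty)
    (hLn : L.Nonempty) (C : Set ℝ) (hC : ∀ x ∈ K, ∀ y ∈ L, x + y ∈ C) :
    volume K + volume L ≤ volume C := by
  obtain ⟨k, hk, hkm⟩ := hK.exists_isGreatest hKn
  obtain ⟨l, hl, hlm⟩ := hL.exists_isLeast hLn
  have h1 : volume ((fun x => x + l) '' K) = volume K := by
    simp
  have h2 : volume ((fun x => k + x) '' L) = volume L := by
    simp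
  rw [← h1, ← h2, ← measure_union₀]
  · apply measure_mono
    rintro z (⟨x, hx, rfl⟩ | ⟨x, hx, rfl⟩)
    · exact hC x hx l hl
    · exact hC k hk x hx
  · exact ((hL.image (by fun_prop)).measurableSet).nullMeasurableSet
  · refine measure_mono_null (t := {k + l}) ?_ (by simp)
    rintro z ⟨⟨x, hx, rfl⟩, ⟨y, hy, hxy⟩⟩
    have := hkm hx
    have := hlm hy
    simp only at hxy
    simp only [Set.mem_singleton_iff]
    linarith

lemma bm_one {A B : Set ℝ} (hA : MeasurableSet A) (hB : MeasurableSet B) (hAn : A.Nonempty)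
    (hBn : B.Nonempty) (C : Set ℝ) (hC : ∀ x ∈ A, ∀ y ∈ B, x + y ∈ C) :
    volume A + volume B ≤ volume C := by
  obtain ⟨a, ha⟩ := hAn
  obtain ⟨b, hb⟩ := hBn
  rw [hA.measure_eq_iSup_isCompact, hB.measure_eq_iSup_isCompact]
  simp only [iSup_and', ]
  refine ENNReal.biSup_add_biSup_le' ⟨∅, by simp⟩ ⟨∅, by simp⟩ ?_
  rintro K ⟨hKA, hK⟩ L ⟨hLB, hL⟩
  refine le_trans (add_le_add (measure_mono (Set.subset_insert a K))
    (measure_mono (Set.subset_insert b L))) ?_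
  apply bm_compact (hK.insert a) (hL.insert b) (Set.insert_nonempty _ _) (Set.insert_nonempty _ _)
  intro x hx y hy
  exact hC x (Set.insert_subset ha hKA hx) y (Set.insert_subset hb hLB hy)

lemma bm_half {A B : Set ℝ} (hA : MeasurableSet A) (hB : MeasurableSet B) (hAn : A.Nonempty)
    (hBn : B.Nonempty) (C : Set ℝ) (hC : ∀ x ∈ A, ∀ y ∈ B, (x + y) / 2 ∈ C) :
    volume A + volume B ≤ 2 * volume C := by
  have h := bm_one hA hB hAn hBn ((fun z => (2⁻¹ : ℝ) * z) ⁻¹' C) (by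
    intro x hx y hy
    have := hC x hx y hy
    simp only [Set.mem_preimage]
    convert this using 1
    ring)
  rw [Real.volume_preimage_mul_left (by norm_num)] at h
  simpa using h

lemma layer (u : ℝ → ℝ≥0∞) (hu : Measurable u) (h1 : ∀ x, u x ≤ 1) :
    ∫⁻ x, u x = ∫⁻ t in Set.Ioo (0:ℝ) 1, volume {x | ENNReal.ofReal t < u x} := by
  have hfin : ∀ x, u x ≠ ⊤ := fun x => ne_top_of_le_ne_top ENNReal.one_ne_top (h1 x)
  have e1 : ∫⁻ x, u x = ∫⁻ x, ENNReal.ofReal (u x).toReal := by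
    congr with x
    rw [ENNReal.ofReal_toReal (hfin x)]
  rw [e1, lintegral_eq_lintegral_meas_lt volume (Filter.Eventually.of_forall fun x => by simp)
    hu.ennreal_toReal.aemeasurable]
  have e2 : ∫⁻ t in Set.Ioi (0:ℝ), volume {a | t < (u a).toReal}
      = ∫⁻ t in Set.Ioi (0:ℝ), (Set.Ioo (0:ℝ) 1).indicator
        (fun t => volume {x | ENNReal.ofReal t < u x}) t := by
    refine setLIntegral_congr_fun measurableSet_Ioi ?_
    intro t ht
    have ht0 : (0:ℝ) < t := ht
    by_cases h : t < 1
    · simp only [Set.indicator, Set.mem_Ioo, ht0, h, and_self, if_true]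
      congr 1
      ext x
      simp only [Set.mem_ofPred_eq]
      rw [ENNReal.ofReal_lt_iff_lt_toReal ht0.le (hfin x)]
    · simp only [Set.indicator, Set.mem_Ioo, ht0, h, and_false, if_false]
      have : {a | t < (u a).toReal} = ∅ := by
        ext x
        simp only [Set.mem_ofPred_eq, Set.mem_empty_iff_false, iff_false, not_lt]
        have : (u x).toReal ≤ 1 := ENNReal.toReal_le_of_le_ofReal (by simp) (by simpa using h1 x)
        linarith
      simp [this]
  rw [e2, setLIntegral_indicator measurableSet_Ioo]
  congr 2
  ext t
  simp +contextual

lemma pl_normalized (f g h : ℝ → ℝ≥0∞) (hf : Measurable f) (hg : Measurable g) (hh : Measurable h)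
    (sf : ⨆ x, f x = 1) (sg : ⨆ x, g x = 1)
    (H : ∀ x y, f x * g y ≤ h ((x + y) / 2) ^ 2) :
    (∫⁻ x, f x) + (∫⁻ x, g x) ≤ 2 * ∫⁻ x, h x := by
  have hle : ∫⁻ x, min (h x) 1 ≤ ∫⁻ x, h x := lintegral_mono fun x => min_le_left _ _
  refine le_trans ?_ (mul_le_mul_right hle 2)
  rw [layer f hf (fun x => sf ▸ le_iSup f x), layer g hg (fun x => sg ▸ le_iSup g x),
    layer _ (hh.min measurable_const) (fun x => min_le_right _ _)]
  have anti : ∀ u : ℝ → ℝ≥0∞, Measurable (fun t : ℝ => volume {x | ENNReal.ofReal t < u x}) := by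
    intro u
    refine Antitone.measurable ?_
    intro s t hst
    apply measure_mono
    intro x hx
    exact lt_of_le_of_lt (ENNReal.ofReal_le_ofReal hst) hx
  rw [← lintegral_add_left (anti f), ← lintegral_const_mul _ (anti _)]
  refine setLIntegral_mono' measurableSet_Ioo ?_
  intro t ht
  have ht1 : ENNReal.ofReal t < 1 := by simpa using ht.2
  refine bm_half (measurableSet_lt measurable_const hf) (measurableSet_lt measurable_const hg)
    ?_ ?_ _ ?_
  · rw [← sf] at ht1
    exact lt_iSup_iff.mp ht1
  · rw [← sg] at ht1
    exact lt_iSup_iff.mp ht1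
  · intro x hx y hy
    simp only [Set.mem_ofPred_eq] at hx hy ⊢
    refine lt_min ?_ ht1
    by_contra hcon
    push Not at hcon
    have h1 : h ((x + y) / 2) ^ 2 ≤ ENNReal.ofReal t ^ 2 := by gcongr
    have h2 : ENNReal.ofReal t ^ 2 < f x * g y := by
      rw [sq]
      exact ENNReal.mul_lt_mul hx hy
    exact absurd (H x y) (not_le.mpr (lt_of_le_of_lt h1 h2))

lemma ennreal_amgm (a b : ℝ≥0∞) : 4 * (a * b) ≤ (a + b) ^ 2 := by
  wlog hab : a ≤ b generalizing a b
  · have := this b a (le_of_not_ge hab)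
    rwa [mul_comm b a, add_comm b a] at this
  obtain ⟨c, rfl⟩ := exists_add_of_le hab
  calc 4 * (a * (a + c)) ≤ 4 * (a * (a + c)) + c ^ 2 := le_self_add
    _ = (a + (a + c)) ^ 2 := by ring

lemma pl_bounded (f g h : ℝ → ℝ≥0∞) (hf : Measurable f) (hg : Measurable g) (hh : Measurable h)
    (sf : ⨆ x, f x ≠ ⊤) (sg : ⨆ x, g x ≠ ⊤)
    (H : ∀ x y, f x * g y ≤ h ((x + y) / 2) ^ 2) :
    (∫⁻ x, f x) * ∫⁻ x, g x ≤ (∫⁻ x, h x) ^ 2 := by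
  set A := ⨆ x, f x with hA
  set B := ⨆ x, g x with hB
  by_cases hA0 : A = 0
  · have : ∀ x, f x = 0 := fun x => le_antisymm (hA0 ▸ le_iSup f x) (zero_le)
    simp [this]
  by_cases hB0 : B = 0
  · have : ∀ x, g x = 0 := fun x => le_antisymm (hB0 ▸ le_iSup g x) (zero_le)
    simp [this]
  obtain ⟨c, hc⟩ : ∃ c : ℝ≥0∞, c ^ 2 = A⁻¹ * B⁻¹ := by
    refine ⟨(A⁻¹ * B⁻¹) ^ (1/2 : ℝ), ?_⟩
    rw [← ENNReal.rpow_natCast, ← ENNReal.rpow_mul]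
    norm_num
  have key := pl_normalized (fun x => A⁻¹ * f x) (fun x => B⁻¹ * g x) (fun x => c * h x)
    (hf.const_mul _) (hg.const_mul _) (hh.const_mul _)
    (by rw [← ENNReal.mul_iSup]; exact ENNReal.inv_mul_cancel hA0 sf)
    (by rw [← ENNReal.mul_iSup]; exact ENNReal.inv_mul_cancel hB0 sg)
    (by
      intro x y
      rw [mul_pow, hc, mul_mul_mul_comm]
      gcongr
      exact H x y)
  rw [lintegral_const_mul _ hf, lintegral_const_mul _ hg, lintegral_const_mul _ hh] at key
  have k2 := (ennreal_amgm _ _).trans (pow_le_pow_left₀ (zero_le) key 2)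
  rw [mul_mul_mul_comm, mul_pow, mul_pow, hc] at k2
  have e4 : (2:ℝ≥0∞) ^ 2 = 4 := by norm_num
  rw [e4] at k2
  rw [ENNReal.mul_le_mul_iff_right (by norm_num) (by norm_num)] at k2
  rwa [ENNReal.mul_le_mul_iff_right] at k2
  · exact mul_ne_zero (ENNReal.inv_ne_zero.mpr sf) (ENNReal.inv_ne_zero.mpr sg)
  · exact ENNReal.mul_ne_top (ENNReal.inv_ne_top.mpr hA0) (ENNReal.inv_ne_top.mpr hB0)

lemma lintegral_trunc (f : ℝ → ℝ≥0∞) (hf : Measurable f) :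
    ∫⁻ x, f x = ⨆ N : ℕ, ∫⁻ x, min (f x) N := by
  rw [← lintegral_iSup (fun N => hf.min measurable_const)]
  · congr with x
    rw [← inf_iSup_eq, ENNReal.iSup_natCast]
    simp
  · intro N M hNM x
    exact min_le_min le_rfl (by exact_mod_cast hNM)

lemma pl_one (f g h : ℝ → ℝ≥0∞) (hf : Measurable f) (hg : Measurable g) (hh : Measurable h)
    (H : ∀ x y, f x * g y ≤ h ((x + y) / 2) ^ 2) :
    (∫⁻ x, f x) * ∫⁻ x, g x ≤ (∫⁻ x, h x) ^ 2 := by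
  rw [lintegral_trunc f hf, lintegral_trunc g hg, ENNReal.iSup_mul]
  refine iSup_le fun N => ?_
  rw [ENNReal.mul_iSup]
  refine iSup_le fun M => ?_
  refine pl_bounded _ _ h (hf.min measurable_const) (hg.min measurable_const) hh ?_ ?_ ?_
  · exact ne_top_of_le_ne_top (ENNReal.natCast_ne_top N) (iSup_le fun x => min_le_right _ _)
  · exact ne_top_of_le_ne_top (ENNReal.natCast_ne_top M) (iSup_le fun x => min_le_right _ _)
  · intro x y
    exact (mul_le_mul' (min_le_left _ _) (min_le_left _ _)).trans (H x y)

/-- Midpoint Prekopa-Leindler in dimension `n`. -/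
lemma pl_pi (n : ℕ) : ∀ (f g h : (Fin n → ℝ) → ℝ≥0∞), Measurable f → Measurable g → Measurable h →
    (∀ x y, f x * g y ≤ h ((2⁻¹ : ℝ) • (x + y)) ^ 2) →
    (∫⁻ x, f x) * ∫⁻ x, g x ≤ (∫⁻ x, h x) ^ 2 := by
  induction n with
  | zero =>
    intro f g h hf hg hh H
    have e : ∀ u : (Fin 0 → ℝ) → ℝ≥0∞, ∫⁻ x, u x = u 0 := by
      intro u
      rw [lintegral_unique]
      rw [Subsingleton.elim (0 : Fin 0 → ℝ) (default : Fin 0 → ℝ)]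
      have : (volume : Measure (Fin 0 → ℝ)) Set.univ = 1 := by simp [volume_pi]
      rw [this, mul_one]
      congr 1
      exact Subsingleton.elim _ _
    rw [e, e, e]
    convert H 0 0 using 3
  | succ n ih =>
    intro f g h hf hg hh H
    have ec : ∀ p : ℝ × (Fin n → ℝ),
        (MeasurableEquiv.piFinSuccAbove (fun _ : Fin (n + 1) => ℝ) 0).symm p
          = Fin.cons p.1 p.2 := by
      intro p
      simp [MeasurableEquiv.piFinSuccAbove, Fin.insertNthEquiv]
    have e : ∀ u : (Fin (n+1) → ℝ) → ℝ≥0∞, Measurable u →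
        ∫⁻ x, u x = ∫⁻ a : ℝ, ∫⁻ x : Fin n → ℝ, u (Fin.cons a x) := by
      intro u hu
      have mp := (volume_preserving_piFinSuccAbove (fun _ : Fin (n + 1) => ℝ) 0).symm
      rw [← mp.lintegral_comp hu, Measure.volume_eq_prod, lintegral_prod]
      · simp only [ec]
      · exact (hu.comp mp.measurable).aemeasurable
    have m : ∀ u : (Fin (n+1) → ℝ) → ℝ≥0∞, Measurable u →
        Measurable (fun p : ℝ × (Fin n → ℝ) => u (Fin.cons p.1 p.2)) := by
      intro u hu
      have mp := (volume_preserving_piFinSuccAbove (fun _ : Fin (n + 1) => ℝ) 0).symm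
      have := hu.comp mp.measurable
      simpa only [Function.comp_def, ec] using this
    rw [e f hf, e g hg, e h hh]
    apply pl_one
    · exact (m f hf).lintegral_prod_right'
    · exact (m g hg).lintegral_prod_right'
    · exact (m h hh).lintegral_prod_right'
    · intro a b
      refine ih _ _ _ ((m f hf).comp measurable_prodMk_left) ((m g hg).comp measurable_prodMk_left)
        ((m h hh).comp measurable_prodMk_left) ?_
      intro x y
      convert H (Fin.cons a x) (Fin.cons b y) using 3
      ext i
      refine Fin.cases ?_ (fun j => ?_) i
      · simp; ring
      · simp; ring


lemma pl_euc {n : ℕ} (f g h : Euc n → ℝ) (hf : Continuous f) (hg : Continuous g)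
    (hh : Continuous h) (f0 : ∀ x, 0 ≤ f x) (g0 : ∀ x, 0 ≤ g x) (h0 : ∀ x, 0 ≤ h x)
    (fi : Integrable f) (gi : Integrable g) (hi : Integrable h)
    (H : ∀ x y, f x * g y ≤ h ((2⁻¹ : ℝ) • (x + y)) ^ 2) :
    (∫ x, f x) * ∫ x, g x ≤ (∫ x, h x) ^ 2 := by
  have mp := PiLp.volume_preserving_toLp (Fin n)
  have e : ∀ u : Euc n → ℝ, Continuous u → (∀ x, 0 ≤ u x) → Integrable u →
      ENNReal.ofReal (∫ x, u x) = ∫⁻ x : Fin n → ℝ, ENNReal.ofReal (u (WithLp.toLp 2 x)) := by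
    intro u hu u0 ui
    rw [ofReal_integral_eq_lintegral_ofReal ui (Filter.Eventually.of_forall u0)]
    exact (mp.lintegral_comp (f := fun x => ENNReal.ofReal (u x)) (by fun_prop)).symm
  have key := pl_pi n (fun x => ENNReal.ofReal (f (WithLp.toLp 2 x)))
    (fun x => ENNReal.ofReal (g (WithLp.toLp 2 x)))
    (fun x => ENNReal.ofReal (h (WithLp.toLp 2 x)))
    (by fun_prop) (by fun_prop) (by fun_prop) (by
      intro x y
      rw [← ENNReal.ofReal_mul (f0 _), ← ENNReal.ofReal_pow (h0 _)]
      exact ENNReal.ofReal_le_ofReal (H _ _))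
  rw [← e f hf f0 fi, ← e g hg g0 gi, ← e h hh h0 hi, 
    ← ENNReal.ofReal_mul (integral_nonneg f0), ← ENNReal.ofReal_pow (integral_nonneg h0)] at key
  exact (ENNReal.ofReal_le_ofReal_iff (by positivity)).mp key

lemma tangent_bound {n : ℕ} {ψ : Euc n → ℝ} (hψ : ContDiff ℝ (⊤ : ℕ∞) ψ) {ε : ℝ}
    (hε : ∀ x v : Euc n, ε * ‖v‖ ^ 2 ≤ iteratedFDeriv ℝ 2 ψ x ![v, v]) (x v : Euc n) :
    ψ x + fderiv ℝ ψ x v + ε / 2 * ‖v‖ ^ 2 ≤ ψ (x + v) := by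
  have hψd : Differentiable ℝ ψ := hψ.differentiable (by simp)
  have hψd2 : Differentiable ℝ (fderiv ℝ ψ) :=
    (hψ.fderiv_right (m := 1) (by norm_cast)).differentiable (by simp)
  have hline : ∀ t : ℝ, HasDerivAt (fun t : ℝ => x + t • v) v t := by
    intro t
    simpa using ((hasDerivAt_id t).smul_const v).const_add x
  let q : ℝ → ℝ := fun t => ψ (x + t • v) - ε / 2 * t ^ 2 * ‖v‖ ^ 2
  let q1 : ℝ → ℝ := fun t => fderiv ℝ ψ (x + t • v) v - ε * t * ‖v‖ ^ 2
  have d1 : ∀ t, HasDerivAt q (q1 t) t := by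
    intro t
    have a : HasDerivAt (fun t : ℝ => ψ (x + t • v)) (fderiv ℝ ψ (x + t • v) v) t :=
      (hψd (x + t • v)).hasFDerivAt.comp_hasDerivAt t (hline t)
    have b : HasDerivAt (fun t : ℝ => ε / 2 * t ^ 2 * ‖v‖ ^ 2) (ε * t * ‖v‖ ^ 2) t := by
      refine ((((hasDerivAt_id t).pow 2).const_mul (ε / 2)).mul_const (‖v‖ ^ 2)).congr_deriv ?_
      simp only [id, Nat.cast_ofNat]
      ring
    exact a.sub b
  have d2 : ∀ t, HasDerivAt q1 (fderiv ℝ (fderiv ℝ ψ) (x + t • v) v v - ε * ‖v‖ ^ 2) t := by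
    intro t
    have a0 : HasDerivAt (fun t : ℝ => fderiv ℝ ψ (x + t • v))
        (fderiv ℝ (fderiv ℝ ψ) (x + t • v) v) t :=
      (hψd2 (x + t • v)).hasFDerivAt.comp_hasDerivAt t (hline t)
    have a : HasDerivAt (fun t : ℝ => fderiv ℝ ψ (x + t • v) v)
        (fderiv ℝ (fderiv ℝ ψ) (x + t • v) v v) t := by
      have := a0.clm_apply (hasDerivAt_const t v)
      simpa using this
    have b : HasDerivAt (fun t : ℝ => ε * t * ‖v‖ ^ 2) (ε * ‖v‖ ^ 2) t := by
      simpa using (((hasDerivAt_id t).const_mul ε).mul_const (‖v‖ ^ 2))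
    exact a.sub b
  have dq : deriv q = q1 := funext fun t => (d1 t).deriv
  have conv : ConvexOn ℝ Set.univ q := by
    refine convexOn_univ_of_deriv2_nonneg (fun t => (d1 t).differentiableAt) ?_ ?_
    · rw [dq]; exact fun t => (d2 t).differentiableAt
    · intro t
      simp only [Function.iterate_succ, Function.iterate_zero, Function.comp, id]
      rw [dq, (d2 t).deriv]
      have := hε (x + t • v) v
      rw [iteratedFDeriv_two_apply] at this
      simp at this
      linarith
  have := conv.le_slope_of_hasDerivAt (Set.mem_univ 0) (Set.mem_univ 1) (by norm_num) (d1 0)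
  simp [slope_def_field, q, q1] at this
  linarith

lemma exp_integrable {n : ℕ} {ψ : Euc n → ℝ} (hψ : ContDiff ℝ (⊤ : ℕ∞) ψ) {ε : ℝ} (h0 : 0 < ε)
    (hε : ∀ x v : Euc n, ε * ‖v‖ ^ 2 ≤ iteratedFDeriv ℝ 2 ψ x ![v, v]) {c : ℝ} (hc : 0 < c) :
    Integrable (fun x => Real.exp (-c * ψ x)) := by
  have hcont : Continuous ψ := hψ.continuous
  let w : Euc n := (InnerProductSpace.toDual ℝ (Euc n)).symm (fderiv ℝ ψ 0)
  have hw : ∀ x, ⟪w, x⟫ = fderiv ℝ ψ 0 x := fun x => InnerProductSpace.toDual_symm_apply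
  have G := (GaussianFourier.integrable_cexp_neg_mul_sq_norm_add (V := Euc n)
    (b := ((c * (ε / 2) : ℝ) : ℂ)) (by simp; positivity) ((-c : ℝ) : ℂ) w).norm
  refine (G.const_mul (Real.exp (-c * ψ 0))).mono' (by fun_prop) ?_
  refine Filter.Eventually.of_forall fun x => ?_
  have hre : (-((c * (ε / 2) : ℝ) : ℂ) * (‖x‖ : ℂ) ^ 2 + ((-c : ℝ) : ℂ) * ((⟪w, x⟫ : ℝ) : ℂ))
      = ((-(c * (ε / 2)) * ‖x‖ ^ 2 + (-c) * ⟪w, x⟫ : ℝ) : ℂ) := by push_cast; ring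
  rw [hre, Complex.norm_exp, Complex.ofReal_re, ← Real.exp_add, Real.norm_eq_abs,
    abs_of_pos (Real.exp_pos _), Real.exp_le_exp, hw]
  have := tangent_bound hψ hε 0 x
  rw [zero_add] at this
  nlinarith

lemma psi_convex {n : ℕ} {ψ : Euc n → ℝ} (hψ : ContDiff ℝ (⊤ : ℕ∞) ψ) {ε : ℝ} (h0 : 0 < ε)
    (hε : ∀ x v : Euc n, ε * ‖v‖ ^ 2 ≤ iteratedFDeriv ℝ 2 ψ x ![v, v]) (x y : Euc n) (a b : ℝ)
    (ha : 0 ≤ a) (hb : 0 ≤ b) (hab : a + b = 1) :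
    ψ (a • x + b • y) ≤ a * ψ x + b * ψ y := by
  set z := a • x + b • y with hz
  have t1 := tangent_bound hψ hε z (x - z)
  have t2 := tangent_bound hψ hε z (y - z)
  rw [add_sub_cancel] at t1 t2
  have p1 : 0 ≤ ε / 2 * ‖x - z‖ ^ 2 := by positivity
  have p2 : 0 ≤ ε / 2 * ‖y - z‖ ^ 2 := by positivity
  have e : a * fderiv ℝ ψ z (x - z) + b * fderiv ℝ ψ z (y - z) = 0 := by
    have : a • (x - z) + b • (y - z) = 0 := by
      rw [smul_sub, smul_sub, sub_add_sub_comm, ← add_smul, hab, one_smul, ← hz, sub_self]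
    rw [← smul_eq_mul, ← smul_eq_mul, ← map_smul, ← map_smul, ← map_add, this, map_zero]
  have m1 := mul_le_mul_of_nonneg_left (show ψ z + fderiv ℝ ψ z (x - z) ≤ ψ x by linarith) ha
  have m2 := mul_le_mul_of_nonneg_left (show ψ z + fderiv ℝ ψ z (y - z) ≤ ψ y by linarith) hb
  have : (a + b) * ψ z = ψ z := by rw [hab, one_mul]
  nlinarith

lemma pl_psi {n : ℕ} {ψ : Euc n → ℝ} (hψ : ContDiff ℝ (⊤ : ℕ∞) ψ) {ε : ℝ} (h0 : 0 < ε)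
    (hε : ∀ x v : Euc n, ε * ‖v‖ ^ 2 ≤ iteratedFDeriv ℝ 2 ψ x ![v, v]) {s : ℝ} (hs : |s| < 1) :
    ((1 - s ^ 2) ^ n) * ((∫ x, Real.exp (-(1 - s) * ψ x)) * ∫ x, Real.exp (-(1 + s) * ψ x))
      ≤ (∫ x, Real.exp (-1 * ψ x)) ^ 2 := by
  have hcont : Continuous ψ := hψ.continuous
  obtain ⟨hs1, hs2⟩ := abs_lt.mp hs
  have ha : 0 < 1 - s := by linarith
  have hb : 0 < 1 + s := by linarith
  have sc : ∀ c : ℝ, 0 < c → ∫ x : Euc n, Real.exp (-c * ψ (c⁻¹ • x))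
      = c ^ n * ∫ x, Real.exp (-c * ψ x) := by
    intro c hc
    have := Measure.integral_comp_inv_smul_of_nonneg (volume : Measure (Euc n))
      (fun x => Real.exp (-c * ψ x)) hc.le
    simpa using this
  have si : ∀ c : ℝ, 0 < c → Integrable (fun x : Euc n => Real.exp (-c * ψ (c⁻¹ • x))) := by
    intro c hc
    exact (exp_integrable hψ h0 hε hc).comp_smul (inv_ne_zero hc.ne')
  have key := pl_euc (fun x => Real.exp (-(1 - s) * ψ ((1 - s)⁻¹ • x)))
    (fun x => Real.exp (-(1 + s) * ψ ((1 + s)⁻¹ • x))) (fun x => Real.exp (-1 * ψ x))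
    (by fun_prop) (by fun_prop) (by fun_prop) (fun x => (Real.exp_pos _).le)
    (fun x => (Real.exp_pos _).le) (fun x => (Real.exp_pos _).le) (si _ ha) (si _ hb)
    (exp_integrable hψ h0 hε one_pos) (by
      intro x y
      rw [← Real.exp_add, ← Real.exp_nat_mul, Real.exp_le_exp]
      have := psi_convex hψ h0 hε ((1 - s)⁻¹ • x) ((1 + s)⁻¹ • y) ((1 - s) / 2) ((1 + s) / 2)
        (by linarith) (by linarith) (by ring)
      rw [smul_smul, smul_smul] at this
      have e1 : (1 - s) / 2 * (1 - s)⁻¹ = 2⁻¹ := by field_simp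
      have e2 : (1 + s) / 2 * (1 + s)⁻¹ = 2⁻¹ := by field_simp
      rw [e1, e2, ← smul_add] at this
      push_cast
      linarith)
  rw [sc _ ha, sc _ hb] at key
  refine le_trans (le_of_eq ?_) key
  rw [show 1 - s ^ 2 = (1 - s) * (1 + s) by ring, mul_pow]
  ring

open ProbabilityTheory in
lemma second_order {Ω : Type*} [MeasurableSpace Ω] (μ : Measure Ω) [IsProbabilityMeasure μ]
    (X : Ω → ℝ) (n : ℕ) (hX : 0 ∈ interior (integrableExpSet X μ))
    (H : ∀ s : ℝ, |s| < 1 → (1 - s ^ 2) ^ n * (mgf X μ s * mgf X μ (-s)) ≤ 1) :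
    (∫ x, X x ^ 2 ∂μ) - (∫ x, X x ∂μ) ^ 2 ≤ (n : ℝ) := by
  by_contra hcon
  push Not at hcon
  set V := (∫ x, X x ^ 2 ∂μ) - (∫ x, X x ∂μ) ^ 2 with hV
  set K := cgf X μ with hK
  set δ := (V - n) / 2 with hδ
  have hδ0 : 0 < δ := by rw [hδ]; linarith
  have hK2 : deriv (deriv K) 0 = V := by
    have := iteratedDeriv_two_cgf hX
    rw [iteratedDeriv_succ, iteratedDeriv_one, deriv_cgf_zero hX] at this
    rw [hK, this]
    simp [hV]
  have anK : AnalyticAt ℝ K 0 := analyticAt_cgf hX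
  have dK2 : HasDerivAt (deriv K) V 0 := by
    rw [← hK2]; exact anK.deriv.differentiableAt.hasDerivAt
  let φ : ℝ → ℝ := fun s => K s + K (-s) + n * Real.log (1 - s ^ 2) - δ * s ^ 2
  let φ1 : ℝ → ℝ := fun s => deriv K s - deriv K (-s) + n * (-(2 * s) / (1 - s ^ 2)) - δ * (2 * s)
  have ev1 : ∀ᶠ s in nhds (0:ℝ), |s| < 1 := by
    have : Filter.Tendsto (fun s : ℝ => |s|) (nhds 0) (nhds |0|) := continuous_abs.tendsto 0
    exact this.eventually_lt_const (by simp)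
  have evK : ∀ᶠ s in nhds (0:ℝ), s ∈ interior (integrableExpSet X μ) :=
    isOpen_interior.eventually_mem hX
  have tneg : Filter.Tendsto (fun s : ℝ => -s) (nhds 0) (nhds 0) := by
    simpa using (continuous_neg.tendsto (0:ℝ))
  have evK' := tneg.eventually evK
  have d1 : ∀ᶠ s in nhds (0:ℝ), HasDerivAt φ (φ1 s) s := by
    filter_upwards [ev1, evK, evK'] with s h1 h2 h3
    have hs : 0 < 1 - s ^ 2 := by
      have := (sq_lt_one_iff_abs_lt_one s).mpr h1
      linarith
    have a : HasDerivAt K (deriv K s) s := (analyticAt_cgf h2).differentiableAt.hasDerivAt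
    have b : HasDerivAt (fun s => K (-s)) (deriv K (-s) * (-1)) s :=
      HasDerivAt.comp (h₂ := K) s (analyticAt_cgf h3).differentiableAt.hasDerivAt (hasDerivAt_neg s)
    have c := ((((hasDerivAt_id s).pow 2).const_sub 1).log hs.ne').const_mul (n : ℝ)
    have d := ((hasDerivAt_id s).pow 2).const_mul δ
    refine (((a.add b).add c).sub d).congr_deriv ?_
    simp [φ1]; ring
  have d2 : HasDerivAt φ1 (2 * V - 2 * n - 2 * δ) 0 := by
    have b : HasDerivAt (fun s => deriv K (-s)) (V * (-1)) 0 :=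
      HasDerivAt.comp (h₂ := deriv K) (h := fun s : ℝ => -s) (0:ℝ) (by simpa using dK2) (hasDerivAt_neg 0)
    have num : HasDerivAt (fun s : ℝ => -(2 * s)) (-(2 * 1)) 0 :=
      ((hasDerivAt_id (0:ℝ)).const_mul 2).neg
    have den := (((hasDerivAt_id (0:ℝ)).pow 2).const_sub 1)
    have c := (num.div den (by simp)).const_mul (n : ℝ)
    have d := ((hasDerivAt_id (0:ℝ)).const_mul 2).const_mul δ
    refine (((dK2.sub b).add c).sub d).congr_deriv ?_
    simp; ring
  have edφ : deriv φ =ᶠ[nhds 0] φ1 := d1.mono fun s hs => hs.deriv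
  have hmin : IsLocalMin φ 0 := by
    refine isLocalMin_of_deriv_deriv_pos ?_ ?_ ?_
    · rw [edφ.deriv_eq, d2.deriv]
      rw [hδ]; linarith
    · rw [d1.self_of_nhds.deriv]; simp [φ1]
    · exact d1.self_of_nhds.continuousAt
  have hφ0 : φ 0 = 0 := by simp [φ, hK]
  obtain ⟨s, ⟨h1, h2, h3, h4⟩, hs0⟩ :=
    (((ev1.and (evK.and (evK'.and hmin))).filter_mono nhdsWithin_le_nhds).and
      (self_mem_nhdsWithin : ({0}ᶜ : Set ℝ) ∈ nhdsWithin (0:ℝ) {0}ᶜ)).exists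
  have hs0 : s ≠ 0 := hs0
  rw [hφ0] at h4
  have hs : 0 < 1 - s ^ 2 := by
    have := (sq_lt_one_iff_abs_lt_one s).mpr h1
    linarith
  have mp1 : 0 < mgf X μ s := mgf_pos (interior_subset (s := integrableExpSet X μ) h2)
  have mp2 : 0 < mgf X μ (-s) := mgf_pos (interior_subset (s := integrableExpSet X μ) h3)
  have hl := Real.log_le_log (by positivity) (H s h1)
  rw [Real.log_mul (by positivity) (by positivity), Real.log_mul mp1.ne' mp2.ne', Real.log_pow,
    Real.log_one] at hl
  have : 0 < δ * s ^ 2 := by positivity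
  simp only [φ, hK, cgf] at h4
  linarith

/-- Varentropy inequality: for a regular log-concave density `e^{−ψ}`,
`Var_μ(ψ) ≤ n`. -/
theorem varentropy_bound {n : ℕ} (μ : Measure (Euc n)) [IsProbabilityMeasure μ]
    (ψ : Euc n → ℝ) (hreg : IsRegularMeasure μ ψ) :
    (∫ x, ψ x ^ 2 ∂μ) - (∫ x, ψ x ∂μ) ^ 2 ≤ (n : ℝ) := by
  obtain ⟨⟨hψ, ⟨ε, h0, hε'⟩, -⟩, hμ⟩ := hreg
  have hε : ∀ x v : Euc n, ε * ‖v‖ ^ 2 ≤ iteratedFDeriv ℝ 2 ψ x ![v, v] :=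
    fun x v => (hε' x v).1
  have hcont : Continuous ψ := hψ.continuous
  have hm : Measurable (fun x => ENNReal.ofReal (Real.exp (-ψ x))) := by fun_prop
  have hfin : ∀ᵐ x : Euc n, ENNReal.ofReal (Real.exp (-ψ x)) < ⊤ :=
    Filter.Eventually.of_forall fun x => ENNReal.ofReal_lt_top
  have hprod : ∀ (s : ℝ) (x : Euc n), (ENNReal.ofReal (Real.exp (-ψ x))).toReal •
      Real.exp (s * ψ x) = Real.exp (-(1 - s) * ψ x) := by
    intro s x
    rw [ENNReal.toReal_ofReal (Real.exp_pos _).le, smul_eq_mul, ← Real.exp_add]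
    congr 1
    ring
  have hmgf : ∀ s : ℝ, ProbabilityTheory.mgf ψ μ s = ∫ x, Real.exp (-(1 - s) * ψ x) := by
    intro s
    rw [ProbabilityTheory.mgf, hμ, integral_withDensity_eq_integral_toReal_smul hm hfin]
    simp only [hprod]
  have hint : ∀ s : ℝ, s < 1 → Integrable (fun x => Real.exp (s * ψ x)) μ := by
    intro s hs
    rw [hμ, integrable_withDensity_iff_integrable_smul' hm hfin]
    simp only [hprod]
    exact exp_integrable hψ h0 hε (by linarith)
  have hmem : (0:ℝ) ∈ interior (ProbabilityTheory.integrableExpSet ψ μ) := by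
    rw [mem_interior]
    exact ⟨Set.Iio 1, fun s hs => hint s hs, isOpen_Iio, by simp⟩
  refine second_order μ ψ n hmem ?_
  intro s hs
  have key := pl_psi hψ h0 hε hs
  have h1 := hmgf 0
  rw [ProbabilityTheory.mgf_zero, sub_zero] at h1
  rw [← h1, one_pow] at key
  rw [hmgf s, hmgf (-s), sub_neg_eq_add]
  exact key
end

section
/- Let μ be a probability measure on ℝⁿ with a regular, log-concave density ρ = e^{−ψ}, let t > 0, and let u be a μ-tempered function. For θ ∈ ℝⁿ let μ_{t,θ} be the probability measure with density p_{t,θ}(x) = e^{⟨θ,x⟩ − t|x|²/2} ρ(x)/Z(t,θ), write p_{t,θ} = e^{−ψ_{t,θ}}, and let L u = Δ u − ⟨∇ψ, ∇u⟩ and L_{t,θ} u = Δ u − ⟨∇ψ_{t,θ}, ∇u⟩. Let X be a random vector with law μ and W an independent Gaussian random vector in ℝⁿ with mean 0 and covariance t·Id, and set θ_t = tX + W, μ_t = μ_{t,θ_t}, L_t = L_{t,θ_t}. Then almost surely u is μ_t-tempered, and ∫ (L u)² dμ + t ∫ |∇u|² dμ = E ∫ (L_t u)² dμ_t. -/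
open MeasureTheory Real
open scoped ENNReal RealInnerProductSpace

lemma integral_withDensity_ofReal' {n : ℕ} (d : Euc n → ℝ) (hd : Continuous d)
    (h0 : ∀ x, 0 ≤ d x) (f : Euc n → ℝ) :
    ∫ x, f x ∂(volume.withDensity fun x => ENNReal.ofReal (d x)) = ∫ x, d x * f x := by
  rw [integral_withDensity_eq_integral_toReal_smul (by fun_prop) (by simp)]
  simp only [ENNReal.toReal_ofReal (h0 _), smul_eq_mul]

lemma integrable_withDensity_ofReal' {n : ℕ} (d : Euc n → ℝ) (hd : Continuous d)
    (h0 : ∀ x, 0 ≤ d x) (f : Euc n → ℝ) :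
    Integrable f (volume.withDensity fun x => ENNReal.ofReal (d x)) ↔
      Integrable (fun x => d x * f x) := by
  rw [integrable_withDensity_iff_integrable_smul' (by fun_prop) (by simp)]
  simp only [ENNReal.toReal_ofReal (h0 _), smul_eq_mul]

lemma gaussDensity_cont (n : ℕ) (s : ℝ) : Continuous (gaussDensity n s) := by
  unfold gaussDensity; fun_prop

lemma gaussDensity_pos (n : ℕ) {s : ℝ} (hs : 0 < s) (x : Euc n) : 0 < gaussDensity n s x := by
  unfold gaussDensity; positivity

lemma gauss_integrable (n : ℕ) {s : ℝ} (hs : 0 < s) : Integrable (gaussDensity n s) := by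
  have h := GaussianFourier.integrable_cexp_neg_mul_sq_norm_add (V := Euc n) (b := ((1 / (2*s) : ℝ) : ℂ))
    (by rw [Complex.ofReal_re]; positivity) 0 0
  have h2 := (h.norm).const_mul ((2 * π * s) ^ (-(n : ℝ) / 2))
  refine h2.congr (Filter.Eventually.of_forall fun x => ?_)
  simp only [gaussDensity]
  congr 1
  rw [Complex.norm_exp]
  congr 1
  have : (-((1 / (2*s) : ℝ) : ℂ) * (‖x‖:ℂ) ^ 2 + 0 * (⟪(0 : Euc n), x⟫ : ℝ)) =
    ((-‖x‖ ^ 2 / (2*s) : ℝ) : ℂ) := by push_cast; ring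
  rw [this, Complex.ofReal_re]

lemma gauss_cexp (n : ℕ) {s : ℝ} (hs : 0 < s) (v : Euc n) (r : ℝ) :
    ∫ x, Complex.exp (r * ⟪v, x⟫ * Complex.I) ∂(gaussMeasure n s) =
      Complex.exp (- (s * ‖v‖ ^ 2 * r ^ 2 / 2 : ℝ)) := by
  have h := GaussianFourier.integral_cexp_neg_mul_sq_norm_add (V := Euc n) (b := ((1 / (2*s) : ℝ) : ℂ))
    (by rw [Complex.ofReal_re]; positivity) (r * Complex.I) v
  unfold gaussMeasure
  rw [integral_withDensity_eq_integral_toReal_smul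
    (by have := gaussDensity_cont n s; fun_prop) (by simp)]
  simp only [ENNReal.toReal_ofReal (gaussDensity_pos n hs _).le]
  have e : ∀ x : Euc n, gaussDensity n s x • Complex.exp (r * ⟪v, x⟫ * Complex.I) =
      (((2 * π * s) ^ (-(n : ℝ) / 2) : ℝ) : ℂ) *
      Complex.exp (-((1 / (2*s) : ℝ) : ℂ) * (‖x‖:ℂ) ^ 2 + (r * Complex.I) * (⟪v, x⟫ : ℝ)) := by
    intro x
    rw [Complex.exp_add, gaussDensity, Complex.real_smul, Complex.ofReal_mul, mul_assoc,
      Complex.ofReal_exp]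
    congr 3
    · push_cast; ring
    · ring
  simp only [e]
  rw [integral_const_mul, h, ← mul_assoc]
  have e1 : ((π : ℂ) / ((1 / (2*s) : ℝ) : ℂ)) ^ ((Module.finrank ℝ (Euc n) : ℂ) / 2) =
      (((2 * π * s) ^ ((n : ℝ) / 2) : ℝ) : ℂ) := by
    rw [Complex.ofReal_cpow (by positivity)]
    simp
    congr 1
    field_simp
  rw [e1, ← Complex.ofReal_mul, ← Real.rpow_add (by positivity)]
  have : -(n : ℝ) / 2 + n / 2 = 0 := by ring
  rw [this, Real.rpow_zero, Complex.ofReal_one, one_mul]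
  congr 1
  have : (s : ℂ) ≠ 0 := by exact_mod_cast hs.ne'
  rw [mul_pow, Complex.I_sq]
  push_cast
  field_simp
  ring

lemma gauss_prob (n : ℕ) {s : ℝ} (hs : 0 < s) : IsProbabilityMeasure (gaussMeasure n s) := by
  have hfin : IsFiniteMeasure (gaussMeasure n s) := by
    unfold gaussMeasure
    exact isFiniteMeasure_withDensity_ofReal (gauss_integrable n hs).2
  have h := gauss_cexp n hs 0 0
  simp at h
  rw [isProbabilityMeasure_iff_real]
  exact_mod_cast h

lemma gauss_map (n : ℕ) {s : ℝ} (hs : 0 < s) (v : Euc n)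
    (V : NNReal) (hV : (V : ℝ) = s * ‖v‖ ^ 2) :
    (gaussMeasure n s).map (fun x => ⟪v, x⟫) = ProbabilityTheory.gaussianReal 0 V := by
  have := gauss_prob n hs
  have hm : AEMeasurable (fun x : Euc n => (⟪v, x⟫ : ℝ)) (gaussMeasure n s) := by fun_prop
  have : IsProbabilityMeasure ((gaussMeasure n s).map (fun x : Euc n => (⟪v, x⟫ : ℝ))) :=
    Measure.isProbabilityMeasure_map hm
  refine Measure.ext_of_charFun ?_
  ext r
  rw [ProbabilityTheory.charFun_gaussianReal, charFun_apply_real, integral_map hm (by fun_prop), gauss_cexp n hs]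
  congr 1
  simp [← Complex.ofReal_mul, ← Complex.ofReal_pow, hV]

lemma gauss_moments (n : ℕ) {s : ℝ} (hs : 0 < s) (v : Euc n) (a : ℝ) :
    Integrable (fun w => (a + ⟪v, w⟫) ^ 2) (gaussMeasure n s) ∧
    ∫ w, (a + ⟪v, w⟫) ^ 2 ∂(gaussMeasure n s) = a ^ 2 + s * ‖v‖ ^ 2 := by
  have hm : AEMeasurable (fun x : Euc n => (⟪v, x⟫ : ℝ)) (gaussMeasure n s) := by fun_prop
  obtain ⟨V, hV⟩ : ∃ V : NNReal, (V : ℝ) = s * ‖v‖ ^ 2 := ⟨⟨s * ‖v‖ ^ 2, by positivity⟩, rfl⟩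
  have key := gauss_map n hs v V hV
  have h2 : MemLp (fun x : ℝ => x) 2 (ProbabilityTheory.gaussianReal 0 V) :=
    ProbabilityTheory.memLp_id_gaussianReal' 2 (by simp)
  have i2 := h2.integrable_sq
  have i1 := h2.integrable (by norm_num)
  have var := ProbabilityTheory.variance_fun_id_gaussianReal (μ := 0) (v := V)
  rw [ProbabilityTheory.variance_of_integral_eq_zero (by fun_prop)
    (by simp)] at var
  have e : (fun x : ℝ => (a + x) ^ 2) = fun x => a ^ 2 + (2 * a) * x + x ^ 2 := by ext; ring
  have I : Integrable (fun x : ℝ => (a + x) ^ 2) (ProbabilityTheory.gaussianReal 0 V) := by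
    rw [e]
    exact ((integrable_const _).add (i1.const_mul _)).add i2
  constructor
  · rw [← key] at I
    exact I.comp_aemeasurable hm
  · rw [← integral_map (φ := fun w : Euc n => (⟪v, w⟫ : ℝ)) (f := fun x : ℝ => (a + x) ^ 2) hm (by fun_prop),
      key, e, integral_add (f := fun x : ℝ => a ^ 2 + (2 * a) * x) ((integrable_const _).add (i1.const_mul _)) i2,
      integral_add (integrable_const _) (i1.const_mul _), integral_const_mul, var]
    simp [hV]

lemma poly_exp_integrable {n : ℕ} (f : Euc n → ℝ) (hf : Continuous f) (C b : ℝ) (k : ℕ)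
    (hb : 0 < b) (h : ∀ x, |f x| ≤ C * ((1 + ‖x‖) ^ k * Real.exp (-b * ‖x‖))) :
    Integrable f := by
  have hi := integrable_one_add_norm (E := Euc n) (μ := volume) (r := ((n + 1 : ℕ) : ℝ)) (by simp)
  set N := k + (n + 1)
  set M := (N.factorial : ℝ) / b ^ N * Real.exp b
  refine (hi.const_mul (|C| * M)).mono' hf.aestronglyMeasurable
    (Filter.Eventually.of_forall fun x => ?_)
  have h1 : (0:ℝ) < 1 + ‖x‖ := by positivity
  have h2 : (b * (1 + ‖x‖)) ^ N / N.factorial ≤ Real.exp (b * (1 + ‖x‖)) :=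
    Real.pow_div_factorial_le_exp _ (by positivity) N
  have h3 : (1 + ‖x‖) ^ N ≤ M * Real.exp (b * ‖x‖) := by
    rw [div_le_iff₀ (by positivity), mul_pow, mul_add, mul_one, Real.exp_add] at h2
    have hbN : 0 < b ^ N := by positivity
    have : M * Real.exp (b * ‖x‖) = (Real.exp b * Real.exp (b * ‖x‖) * N.factorial) / b ^ N := by
      simp only [M]; ring
    rw [this, le_div_iff₀ hbN]
    linarith
  have h4 : (1 + ‖x‖) ^ k * Real.exp (-b * ‖x‖) ≤ M * (1 + ‖x‖) ^ (-((n + 1 : ℕ) : ℝ)) := by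
    rw [Real.rpow_neg h1.le, Real.rpow_natCast, ← div_eq_mul_inv, le_div_iff₀ (by positivity),
      neg_mul, Real.exp_neg]
    have hE := Real.exp_pos (b * ‖x‖)
    rw [pow_add] at h3
    calc (1 + ‖x‖) ^ k * (Real.exp (b * ‖x‖))⁻¹ * (1 + ‖x‖) ^ (n + 1)
        = ((1 + ‖x‖) ^ k * (1 + ‖x‖) ^ (n + 1)) / Real.exp (b * ‖x‖) := by
          rw [div_eq_mul_inv]; ring
      _ ≤ M := by rw [div_le_iff₀ hE]; exact h3
  rw [Real.norm_eq_abs]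
  calc |f x| ≤ C * ((1 + ‖x‖) ^ k * Real.exp (-b * ‖x‖)) := h x
    _ ≤ |C| * ((1 + ‖x‖) ^ k * Real.exp (-b * ‖x‖)) := by
        gcongr; exact le_abs_self C
    _ ≤ |C| * (M * (1 + ‖x‖) ^ (-((n + 1 : ℕ) : ℝ))) := by gcongr
    _ = _ := by ring

lemma gradient_cont {n : ℕ} (u : Euc n → ℝ) (hu : ContDiff ℝ (⊤ : ℕ∞) u) :
    Continuous (gradient u) := by
  have : Continuous (fderiv ℝ u) := hu.continuous_fderiv (by simp)
  exact (InnerProductSpace.toDual ℝ (Euc n)).symm.continuous.comp this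

lemma norm_gradient_eq {n : ℕ} (u : Euc n → ℝ) (x : Euc n) :
    ‖gradient u x‖ = ‖iteratedFDeriv ℝ 1 u x‖ := by
  rw [norm_iteratedFDeriv_one, ← toDual_gradient, LinearIsometryEquiv.norm_map]

lemma lap_cont {n : ℕ} (u : Euc n → ℝ) (hu : ContDiff ℝ (⊤ : ℕ∞) u) : Continuous (lap u) := by
  have : Continuous (iteratedFDeriv ℝ 2 u) := hu.continuous_iteratedFDeriv (WithTop.coe_le_coe.2 (le_top : ((2 : ℕ) : ℕ∞) ≤ ⊤))
  unfold lap
  fun_prop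

lemma abs_lap_le {n : ℕ} (u : Euc n → ℝ) (x : Euc n) :
    |lap u x| ≤ n * ‖iteratedFDeriv ℝ 2 u x‖ := by
  unfold lap
  refine (Finset.abs_sum_le_sum_abs _ _).trans ?_
  have : ∀ i ∈ (Finset.univ : Finset (Fin n)),
      |iteratedFDeriv ℝ 2 u x ![EuclideanSpace.single i (1:ℝ), EuclideanSpace.single i (1:ℝ)]| ≤
        ‖iteratedFDeriv ℝ 2 u x‖ := by
    intro i _
    have := (iteratedFDeriv ℝ 2 u x).le_opNorm
      ![EuclideanSpace.single i (1:ℝ), EuclideanSpace.single i (1:ℝ)]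
    simpa [Fin.prod_univ_two] using this
  refine (Finset.sum_le_sum this).trans ?_
  simp

lemma Lop_cont {n : ℕ} (ψ u : Euc n → ℝ) (hψ : ContDiff ℝ (⊤ : ℕ∞) ψ)
    (hu : ContDiff ℝ (⊤ : ℕ∞) u) : Continuous (Lop ψ u) := by
  have h1 := lap_cont u hu
  have h2 := gradient_cont u hu
  have h3 := gradient_cont ψ hψ
  unfold Lop
  fun_prop

lemma tempered_integrable {n : ℕ} (ψ u : Euc n → ℝ) (hψ : IsRegularPotential ψ)
    (hu : IsTempered (fun x => Real.exp (-ψ x)) u) :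
    Integrable (fun x => Real.exp (-ψ x) * Lop ψ u x ^ 2) ∧
    Integrable (fun x => Real.exp (-ψ x) * ‖gradient u x‖ ^ 2) := by
  obtain ⟨hψs, -, hψg⟩ := hψ
  obtain ⟨hus, hug⟩ := hu
  obtain ⟨C1, hC1, a1, ha1, h1⟩ := hug 1
  obtain ⟨C2, hC2, a2, ha2, h2⟩ := hug 2
  obtain ⟨C, k, hC⟩ := hψg 1
  have cg := gradient_cont u hus
  have cL := Lop_cont ψ u hψs hus
  have cψ := hψs.continuous
  have hs : ∀ x, Real.sqrt (Real.exp (-ψ x)) ^ 2 = Real.exp (-ψ x) := fun x =>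
    Real.sq_sqrt (Real.exp_pos _).le
  have hsp : ∀ x, 0 < Real.sqrt (Real.exp (-ψ x)) := fun x => Real.sqrt_pos.2 (Real.exp_pos _)
  have g1 : ∀ x, Real.sqrt (Real.exp (-ψ x)) * ‖gradient u x‖ ≤ C1 * Real.exp (-a1 * ‖x‖) := by
    intro x
    have := h1 x
    rw [← norm_gradient_eq, div_mul_eq_mul_div, le_div_iff₀ (hsp x)] at this
    linarith
  have g2 : ∀ x, Real.sqrt (Real.exp (-ψ x)) * ‖iteratedFDeriv ℝ 2 u x‖ ≤
      C2 * Real.exp (-a2 * ‖x‖) := by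
    intro x
    have := h2 x
    rw [div_mul_eq_mul_div, le_div_iff₀ (hsp x)] at this
    linarith
  constructor
  · set a := min a1 a2
    have ha : 0 < a := lt_min ha1 ha2
    set K := n * C2 + |C| * C1
    have hK : 0 ≤ K := by positivity
    refine poly_exp_integrable _ (by fun_prop) (K ^ 2) (2 * a) (2 * k) (by positivity) fun x => ?_
    have hb : Real.sqrt (Real.exp (-ψ x)) * |Lop ψ u x| ≤
        K * ((1 + ‖x‖) ^ k * Real.exp (-a * ‖x‖)) := by
      have e1 : Real.exp (-a1 * ‖x‖) ≤ Real.exp (-a * ‖x‖) := by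
        apply Real.exp_le_exp.2
        have := mul_le_mul_of_nonneg_right (min_le_left a1 a2) (norm_nonneg x)
        simp only [a]; linarith
      have e2 : Real.exp (-a2 * ‖x‖) ≤ Real.exp (-a * ‖x‖) := by
        apply Real.exp_le_exp.2
        have := mul_le_mul_of_nonneg_right (min_le_right a1 a2) (norm_nonneg x)
        simp only [a]; linarith
      have hp : (1:ℝ) ≤ (1 + ‖x‖) ^ k := one_le_pow₀ (by linarith [norm_nonneg x])
      have hL : |Lop ψ u x| ≤ n * ‖iteratedFDeriv ℝ 2 u x‖ +
          (|C| * (1 + ‖x‖) ^ k) * ‖gradient u x‖ := by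
        unfold Lop
        refine (abs_sub _ _).trans (add_le_add (abs_lap_le u x) ?_)
        refine (abs_real_inner_le_norm _ _).trans ?_
        gcongr
        rw [norm_gradient_eq]
        refine (hC x).trans ?_
        gcongr
        exact le_abs_self C
      calc Real.sqrt (Real.exp (-ψ x)) * |Lop ψ u x|
          ≤ Real.sqrt (Real.exp (-ψ x)) * (n * ‖iteratedFDeriv ℝ 2 u x‖ +
          (|C| * (1 + ‖x‖) ^ k) * ‖gradient u x‖) := by gcongr
        _ = n * 1 * (Real.sqrt (Real.exp (-ψ x)) * ‖iteratedFDeriv ℝ 2 u x‖) +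
          (|C| * (1 + ‖x‖) ^ k) * (Real.sqrt (Real.exp (-ψ x)) * ‖gradient u x‖) := by ring
        _ ≤ n * (1 + ‖x‖) ^ k * (C2 * Real.exp (-a * ‖x‖)) +
          (|C| * (1 + ‖x‖) ^ k) * (C1 * Real.exp (-a * ‖x‖)) := by
            have q1 := (g1 x).trans (mul_le_mul_of_nonneg_left e1 hC1.le)
            have q2 := (g2 x).trans (mul_le_mul_of_nonneg_left e2 hC2.le)
            gcongr
        _ = _ := by simp only [K]; ring
    have := pow_le_pow_left₀ (by positivity) hb 2
    rw [abs_of_nonneg (by positivity)]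
    calc _ = (Real.sqrt (Real.exp (-ψ x)) * |Lop ψ u x|) ^ 2 := by rw [mul_pow, hs, sq_abs]
      _ ≤ _ := this
      _ = _ := by
        rw [mul_pow, mul_pow, ← pow_mul, ← Real.exp_nat_mul]
        congr 2
        · ring
        · congr 1; push_cast; ring
  · refine poly_exp_integrable _ (by fun_prop) (C1 ^ 2) (2 * a1) 0 (by positivity) fun x => ?_
    have := pow_le_pow_left₀ (by positivity) (g1 x) 2
    rw [abs_of_nonneg (by positivity)]
    calc _ = (Real.sqrt (Real.exp (-ψ x)) * ‖gradient u x‖) ^ 2 := by rw [mul_pow, hs]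
      _ ≤ _ := this
      _ = _ := by
        rw [mul_pow, ← Real.exp_nat_mul, pow_zero, one_mul]
        congr 2; push_cast; ring

lemma gd_split {n : ℕ} {t : ℝ} (ht : 0 < t) (θ x : Euc n) :
    gaussDensity n t (θ - t • x) =
      gaussDensity n t θ * Real.exp (⟪θ, x⟫ - t * ‖x‖ ^ 2 / 2) := by
  unfold gaussDensity
  rw [mul_assoc (_ ^ _) (Real.exp _) (Real.exp _), ← Real.exp_add]
  congr 2
  rw [norm_sub_sq_real, norm_smul, inner_smul_right, Real.norm_of_nonneg ht.le]
  field_simp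
  ring

lemma tilt_exp_le {n : ℕ} {t : ℝ} (ht : 0 < t) (θ x : Euc n) :
    Real.exp (⟪θ, x⟫ - t * ‖x‖ ^ 2 / 2) ≤ Real.exp (‖θ‖ ^ 2 / (2 * t)) := by
  apply Real.exp_le_exp.2
  have h := real_inner_le_norm θ x
  have h2 : ‖θ‖ * ‖x‖ ≤ ‖θ‖ ^ 2 / (2 * t) + t * ‖x‖ ^ 2 / 2 := by
    have : ‖θ‖ ^ 2 / (2 * t) + t * ‖x‖ ^ 2 / 2 - ‖θ‖ * ‖x‖ = (‖θ‖ - t * ‖x‖) ^ 2 / (2 * t) := by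
      field_simp; ring
    have h3 : 0 ≤ (‖θ‖ - t * ‖x‖) ^ 2 / (2 * t) := by positivity
    linarith
  linarith

lemma tilt_exp_integrable {n : ℕ} (μ : Measure (Euc n)) [IsProbabilityMeasure μ]
    {t : ℝ} (ht : 0 < t) (θ : Euc n) :
    Integrable (fun x => Real.exp (⟪θ, x⟫ - t * ‖x‖ ^ 2 / 2)) μ := by
  refine Integrable.of_bound (by fun_prop) (Real.exp (‖θ‖ ^ 2 / (2 * t)))
    (Filter.Eventually.of_forall fun x => ?_)
  rw [Real.norm_of_nonneg (Real.exp_pos _).le]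
  exact tilt_exp_le ht θ x

lemma abstract_bochner {n : ℕ} (μ : Measure (Euc n)) [IsProbabilityMeasure μ]
    {t : ℝ} (ht : 0 < t) (A : Euc n → ℝ) (V : Euc n → Euc n) (hA : Continuous A)
    (hV : Continuous V) (iA : Integrable (fun x => A x ^ 2) μ)
    (iV : Integrable (fun x => ‖V x‖ ^ 2) μ) (H Z : Euc n → ℝ)
    (hZ : ∀ θ, Z θ = ∫ x, Real.exp (⟪θ, x⟫ - t * ‖x‖ ^ 2 / 2) ∂μ) (hZ0 : ∀ θ, 0 < Z θ)
    (hH : ∀ θ, H θ = (Z θ)⁻¹ * ∫ y, Real.exp (⟪θ, y⟫ - t * ‖y‖ ^ 2 / 2) *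
      (A y + ⟪V y, θ - t • y⟫) ^ 2 ∂μ) :
    ∫ x, ∫ w, H (t • x + w) ∂(gaussMeasure n t) ∂μ =
      (∫ x, A x ^ 2 ∂μ) + t * ∫ x, ‖V x‖ ^ 2 ∂μ := by
  have cg := gaussDensity_cont n t
  have pg := fun θ => gaussDensity_pos n ht θ
  have gi := fun f => integral_withDensity_ofReal' (gaussDensity n t) cg (fun x => (pg x).le) f
  have gint := fun f => integrable_withDensity_ofReal' (gaussDensity n t) cg (fun x => (pg x).le) f
  -- translation of the moments
  have mom : ∀ y, Integrable (fun θ => gaussDensity n t (θ - t • y) * (A y + ⟪V y, θ - t • y⟫) ^ 2)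
      ∧ ∫ θ, gaussDensity n t (θ - t • y) * (A y + ⟪V y, θ - t • y⟫) ^ 2 =
        A y ^ 2 + t * ‖V y‖ ^ 2 := by
    intro y
    obtain ⟨m1, m2⟩ := gauss_moments n ht (V y) (A y)
    unfold gaussMeasure at m1 m2
    rw [gint] at m1
    rw [gi] at m2
    refine ⟨m1.comp_sub_right (t • y), ?_⟩
    rw [← m2]
    exact integral_sub_right_eq_self
      (fun θ => gaussDensity n t θ * (A y + ⟪V y, θ⟫) ^ 2) (t • y)
  -- the joint integrand
  have K : Integrable (Function.uncurry fun (θ y : Euc n) =>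
      gaussDensity n t (θ - t • y) * (A y + ⟪V y, θ - t • y⟫) ^ 2) (volume.prod μ) := by
    have hc : Continuous (Function.uncurry fun (θ y : Euc n) =>
      gaussDensity n t (θ - t • y) * (A y + ⟪V y, θ - t • y⟫) ^ 2) := by
      unfold Function.uncurry
      fun_prop
    rw [integrable_prod_iff' hc.aestronglyMeasurable]
    refine ⟨Filter.Eventually.of_forall fun y => (mom y).1, ?_⟩
    refine (iA.add (iV.const_mul t)).congr (Filter.Eventually.of_forall fun y => ?_)
    simp only [Function.uncurry, Pi.add_apply]
    rw [← (mom y).2]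
    congr 1
    ext θ
    rw [Real.norm_of_nonneg (mul_nonneg (pg _).le (sq_nonneg _))]
  have Keq : ∀ θ, ∫ y, gaussDensity n t (θ - t • y) * (A y + ⟪V y, θ - t • y⟫) ^ 2 ∂μ =
      gaussDensity n t θ * Z θ * H θ := by
    intro θ
    simp only [gd_split ht, mul_assoc]
    rw [integral_const_mul, hH, mul_inv_cancel_left₀ (hZ0 θ).ne']
  have KI : Integrable (fun θ => gaussDensity n t θ * Z θ * H θ) := by
    have := K.integral_prod_left
    refine this.congr (Filter.Eventually.of_forall fun θ => ?_)
    exact Keq θ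
  have Zeq : ∀ θ, ∫ x, gaussDensity n t (θ - t • x) ∂μ = gaussDensity n t θ * Z θ := by
    intro θ
    simp only [gd_split ht]
    rw [integral_const_mul, hZ]
  have Zm : StronglyMeasurable (fun θ => gaussDensity n t θ * Z θ) := by
    have hc : Continuous (Function.uncurry fun (θ x : Euc n) => gaussDensity n t (θ - t • x)) := by
      unfold Function.uncurry
      fun_prop
    have := hc.stronglyMeasurable.integral_prod_right (ν := μ)
    simpa only [Zeq] using this
  have Hm : AEStronglyMeasurable H := by
    have h1 : AEStronglyMeasurable (fun θ => (gaussDensity n t θ * Z θ)⁻¹ *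
        (gaussDensity n t θ * Z θ * H θ)) :=
      (Zm.measurable.inv.aestronglyMeasurable).mul KI.aestronglyMeasurable
    refine h1.congr (Filter.Eventually.of_forall fun θ => ?_)
    exact inv_mul_cancel_left₀ (mul_pos (pg θ) (hZ0 θ)).ne' _
  have Hnn : ∀ θ, 0 ≤ H θ := by
    intro θ
    rw [hH]
    exact mul_nonneg (inv_nonneg.2 (hZ0 θ).le) (integral_nonneg fun y => by positivity)
  have J : Integrable (Function.uncurry fun (θ x : Euc n) =>
      gaussDensity n t (θ - t • x) * H θ) (volume.prod μ) := by
    have hc : Continuous (fun p : Euc n × Euc n => gaussDensity n t (p.1 - t • p.2)) := by fun_prop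
    have hm : AEStronglyMeasurable (Function.uncurry fun (θ x : Euc n) =>
      gaussDensity n t (θ - t • x) * H θ) (volume.prod μ) :=
      hc.aestronglyMeasurable.mul Hm.comp_fst
    rw [integrable_prod_iff hm]
    refine ⟨Filter.Eventually.of_forall fun θ => ?_, ?_⟩
    · simp only [Function.uncurry, gd_split ht]
      exact ((tilt_exp_integrable μ ht θ).const_mul _).mul_const _
    · refine KI.congr (Filter.Eventually.of_forall fun θ => ?_)
      simp only [Function.uncurry]
      rw [← Zeq, ← integral_mul_const]
      congr 1
      ext x
      rw [Real.norm_of_nonneg (mul_nonneg (pg _).le (Hnn _))]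
  have step : ∀ x, ∫ w, H (t • x + w) ∂(gaussMeasure n t) =
      ∫ θ, gaussDensity n t (θ - t • x) * H θ := by
    intro x
    unfold gaussMeasure
    rw [gi, ← integral_sub_right_eq_self _ (t • x)]
    simp
  simp only [step]
  rw [← integral_integral_swap J]
  simp only [integral_mul_const, Zeq]
  simp only [← Keq]
  rw [integral_integral_swap K]
  simp only [(mom _).2]
  rw [integral_add iA (iV.const_mul t), integral_const_mul]

lemma tiltZ_eq {n : ℕ} (μ : Measure (Euc n)) (ψ : Euc n → ℝ) (hψ : Continuous ψ)
    (hμ : μ = volume.withDensity (fun x => ENNReal.ofReal (Real.exp (-ψ x)))) (t : ℝ) (θ : Euc n) :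
    tiltZ (fun y => Real.exp (-ψ y)) t θ =
      ∫ x, Real.exp (⟪θ, x⟫ - t * ‖x‖ ^ 2 / 2) ∂μ := by
  rw [hμ, integral_withDensity_ofReal' (fun x => Real.exp (-ψ x)) (by fun_prop)
    (fun x => (Real.exp_pos _).le)]
  unfold tiltZ
  simp only [mul_comm]

lemma tilt_pos {n : ℕ} (μ : Measure (Euc n)) [IsProbabilityMeasure μ]
    {t : ℝ} (ht : 0 < t) (θ : Euc n) :
    0 < ∫ x, Real.exp (⟪θ, x⟫ - t * ‖x‖ ^ 2 / 2) ∂μ :=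
  integral_exp_pos (tilt_exp_integrable μ ht θ)

lemma tilt_tempered {n : ℕ} (ψ u : Euc n → ℝ) {t : ℝ} (ht : 0 < t) (θ : Euc n)
    (hZ : 0 < tiltZ (fun y => Real.exp (-ψ y)) t θ)
    (hu : IsTempered (fun x => Real.exp (-ψ x)) u) :
    IsTempered (tiltDensity (fun y => Real.exp (-ψ y)) t θ) u := by
  refine ⟨hu.1, fun m => ?_⟩
  obtain ⟨C, hC, a, ha, h⟩ := hu.2 m
  set Z := tiltZ (fun y => Real.exp (-ψ y)) t θ with hZd
  set E := Real.exp (‖θ‖ ^ 2 / (2 * t))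
  have hE : 0 < E := Real.exp_pos _
  refine ⟨C * Real.sqrt (E / Z), by positivity, a, ha, fun x => (h x).trans ?_⟩
  have hr : 0 < Real.exp (-ψ x) := Real.exp_pos _
  gcongr ?_ * _
  rw [div_le_div_iff₀ (by positivity) (by unfold tiltDensity; rw [← hZd]; positivity), mul_assoc,
    ← Real.sqrt_mul (by positivity)]
  gcongr
  unfold tiltDensity
  rw [← hZd, div_mul_eq_mul_div]
  gcongr
  exact tilt_exp_le ht θ x

lemma tilt_Lop {n : ℕ} (ψ u : Euc n → ℝ) (hψ : Differentiable ℝ ψ) (t : ℝ) (θ : Euc n)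
    (hZ : 0 < tiltZ (fun y => Real.exp (-ψ y)) t θ) (y : Euc n) :
    Lop (fun z => -Real.log (tiltDensity (fun v => Real.exp (-ψ v)) t θ z)) u y =
      Lop ψ u y + ⟪gradient u y, θ - t • y⟫ := by
  set Z := tiltZ (fun y => Real.exp (-ψ y)) t θ with hZd
  have e : (fun z => -Real.log (tiltDensity (fun v => Real.exp (-ψ v)) t θ z)) =
      fun z => ψ z - ⟪θ, z⟫ + t / 2 * ‖z‖ ^ 2 + Real.log Z := by
    ext z
    unfold tiltDensity
    rw [← hZd, Real.log_div (by positivity) hZ.ne', Real.log_mul (by positivity) (by positivity),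
      Real.log_exp, Real.log_exp]
    ring
  have hd : HasFDerivAt (fun z : Euc n => ψ z - ⟪θ, z⟫ + t / 2 * ‖z‖ ^ 2 + Real.log Z)
      (fderiv ℝ ψ y - innerSL ℝ θ + (t / 2) • (2 • innerSL ℝ y)) y :=
    ((((hψ y).hasFDerivAt.sub ((innerSL ℝ θ).hasFDerivAt)).add
      ((hasStrictFDerivAt_norm_sq y).hasFDerivAt.const_mul (t / 2))).add_const _)
  have hg : gradient (fun z => -Real.log (tiltDensity (fun v => Real.exp (-ψ v)) t θ z)) y =
      gradient ψ y - θ + t • y := by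
    rw [e]
    refine HasGradientAt.gradient ?_
    rw [hasGradientAt_iff_hasFDerivAt]
    refine hd.congr_fderiv ?_
    ext v
    simp
    ring
  unfold Lop
  rw [hg, inner_add_left, inner_sub_left, inner_sub_right, inner_smul_left, inner_smul_right,
    real_inner_comm θ, real_inner_comm y]
  simp
  ring

/-- Localized Bochner formula: almost surely `u` is `μ_t`-tempered and
`∫ (Lu)² dμ + t ∫ |∇u|² dμ = E ∫ (L_t u)² dμ_t`, where `θ_t = tX + W`. -/
theorem localized_bochner {n : ℕ} (μ : Measure (Euc n)) [IsProbabilityMeasure μ]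
    (ψ : Euc n → ℝ) (hreg : IsRegularMeasure μ ψ) (t : ℝ) (ht : 0 < t)
    (u : Euc n → ℝ) (hu : IsTempered (fun x => Real.exp (-ψ x)) u) :
    (∀ᵐ x ∂μ, ∀ᵐ w ∂(gaussMeasure n t),
      IsTempered (tiltDensity (fun y => Real.exp (-ψ y)) t (t • x + w)) u) ∧
    (∫ x, (Lop ψ u x) ^ 2 ∂μ) + t * ∫ x, ‖gradient u x‖ ^ 2 ∂μ =
      ∫ x, ∫ w,
        (∫ y, (Lop (fun z => -Real.log (tiltDensity (fun v => Real.exp (-ψ v)) t (t • x + w) z)) u y) ^ 2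
          ∂(tiltMeasure (fun v => Real.exp (-ψ v)) t (t • x + w)))
        ∂(gaussMeasure n t) ∂μ := by
  obtain ⟨hψ, hμ⟩ := hreg
  have hψs := hψ.1
  have cψ := hψs.continuous
  have hZe := fun θ => tiltZ_eq μ ψ cψ hμ t θ
  have hZ : ∀ θ, 0 < tiltZ (fun y => Real.exp (-ψ y)) t θ := fun θ => by
    rw [hZe]; exact tilt_pos μ ht θ
  refine ⟨Filter.Eventually.of_forall fun x => Filter.Eventually.of_forall fun w =>
    tilt_tempered ψ u ht _ (hZ _) hu, ?_⟩
  have hw := integrable_withDensity_ofReal' (fun x => Real.exp (-ψ x)) (by fun_prop)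
    (fun x => (Real.exp_pos _).le)
  have hwi := integral_withDensity_ofReal' (fun x => Real.exp (-ψ x)) (by fun_prop)
    (fun x => (Real.exp_pos _).le)
  rw [← hμ] at hw hwi
  obtain ⟨i1, i2⟩ := tempered_integrable ψ u hψ hu
  rw [← hw] at i1 i2
  refine (abstract_bochner μ ht (Lop ψ u) (gradient u) (Lop_cont ψ u hψs hu.1)
    (gradient_cont u hu.1) i1 i2
    (fun θ => ∫ y, (Lop (fun z => -Real.log (tiltDensity (fun v => Real.exp (-ψ v)) t θ z)) u y) ^ 2
          ∂(tiltMeasure (fun v => Real.exp (-ψ v)) t θ)) _ hZe hZ fun θ => ?_).symm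
  simp only [tilt_Lop ψ u (hψs.differentiable (by simp)) t θ (hZ θ)]
  unfold tiltMeasure
  rw [integral_withDensity_ofReal' _ (by unfold tiltDensity; fun_prop)
    (fun x => by unfold tiltDensity; have := hZ θ; positivity), hwi, ← integral_const_mul]
  congr 1
  ext y
  unfold tiltDensity
  ring
end
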